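/- For every m ≥ 1, the number of valid layer orderings of the 2-alternating assignment with m blocks on the 1×(2m+1) strip equals the number of walks of length m in ℤ² starting at (2,1) whose allowed steps move from a point (a,b) to a point (b+1, i) for some integer i with 1 ≤ i ≤ a. -/

import Mathlib

/-- A crease direction: mountain or valley. -/
inductive MV : Type
  | M : MV
  | V : MV
deriving DecidableEq

/-- The value `σ(i)` of a layer ordering at face `i`, as a natural number
(`0` if `i` is out of range). -/
def faceVal {n : ℕ} (σ : Equiv.Perm (Fin n)) (i : ℕ) : ℕ :=
  if h : i < n then (σ ⟨i, h⟩ : Fin n) else 0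

/-- Condition (1): the layer ordering respects the mountain–valley assignment. -/
def MVRelations (n : ℕ) (μ : ℕ → MV) (σ : Equiv.Perm (Fin n)) : Prop :=
  ∀ i, i + 1 < n →
    if (μ i = MV.M ∧ Even i) ∨ (μ i = MV.V ∧ Odd i)
    then faceVal σ (i + 1) < faceVal σ i
    else faceVal σ i < faceVal σ (i + 1)

/-- `x` lies strictly between `lo` and `hi` (in either order). -/
def StrictlyBetween (x a b : ℕ) : Prop := min a b < x ∧ x < max a b

/-- Condition (2): no two creases on the same side cross. -/
def NoCrossings (n : ℕ) (σ : Equiv.Perm (Fin n)) : Prop :=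
  ∀ i j, i + 1 < n → j + 1 < n → i % 2 = j % 2 →
    ¬ Xor' (StrictlyBetween (faceVal σ j) (faceVal σ i) (faceVal σ (i + 1)))
           (StrictlyBetween (faceVal σ (j + 1)) (faceVal σ i) (faceVal σ (i + 1)))

/-- A valid layer ordering for the MV assignment `μ` on the `1 × n` strip. -/
def ValidLayerOrdering (n : ℕ) (μ : ℕ → MV) (σ : Equiv.Perm (Fin n)) : Prop :=
  MVRelations n μ σ ∧ NoCrossings n σ

/-- `c(μ)`: the number of valid layer orderings for `μ` on the `1 × n` strip. -/
noncomputable def foldCount (n : ℕ) (μ : ℕ → MV) : ℕ :=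
  Nat.card {σ : Equiv.Perm (Fin n) // ValidLayerOrdering n μ σ}

/-- The 2-alternating assignment: crease `(k,k+1)` is `M` if `⌊k/2⌋` is even, `V` otherwise. -/
def twoAlt : ℕ → MV := fun k => if Even (k / 2) then MV.M else MV.V

/-- One allowed step of the walk: from `(a,b)` one may move to `(b+1,i)` with `1 ≤ i ≤ a`. -/
def WalkStep (p q : ℤ × ℤ) : Prop := q.1 = p.2 + 1 ∧ 1 ≤ q.2 ∧ q.2 ≤ p.1

/-- `l` is the list of points `p_0, …, p_m` of a walk of length `m` in `ℤ²`
starting at `(2,1)` with the allowed steps. -/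
def IsWalk (m : ℕ) (l : List (ℤ × ℤ)) : Prop :=
  l.length = m + 1 ∧ l.head? = some (2, 1) ∧ l.Chain' WalkStep

/-- The number of walks of length `m`. -/
noncomputable def walkCount (m : ℕ) : ℕ :=
  Nat.card {l : List (ℤ × ℤ) // IsWalk m l}

/-- `W_m(a,b)`: the number of walks of length `m` ending at the point `(a,b)`. -/
noncomputable def walkCountEnd (m : ℕ) (a b : ℤ) : ℕ :=
  Nat.card {l : List (ℤ × ℤ) // IsWalk m l ∧ l.getLast? = some (a, b)}

/-! The creases on one side of a folded strip are disjoint arcs that cut that side into regions, and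
a new face may be attached exactly at the gaps that lie in the region of the last face. When two
faces are attached to a 2-alternating strip, the first one is forced into the gap directly below the
last face, because every lower gap is cut off by a crease. The second one may then go into any of
the `a` gaps at or above that gap which lie in its region on the other side; let `b` be the number
of such gaps at or below it. After turning the stack upside down the pair `(a, b)` has become
`(b + 1, i)`, where `i` is the rank from above of the gap chosen among the `a`. So the foldings form
a generating tree whose succession rule is the step of the walk. -/

namespace StampFolding

theorem bijOn_card_filter_le {α : Type*} [LinearOrder α] (A : Finset α) :
    Set.BijOn (fun p => {q ∈ A | p ≤ q}.card) A (Finset.Icc 1 A.card) := by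
  have hmaps : Set.MapsTo (fun p => {q ∈ A | p ≤ q}.card) A (Finset.Icc 1 A.card) := fun p hp =>
    Finset.mem_coe.2 <| Finset.mem_Icc.2 ⟨Finset.card_pos.2 ⟨p, Finset.mem_filter.2 ⟨hp, le_rfl⟩⟩,
      Finset.card_filter_le _ _⟩
  have hinj : Set.InjOn (fun p => {q ∈ A | p ≤ q}.card) A := by
    refine StrictAntiOn.injOn fun p hp q _ hpq => Finset.card_lt_card ?_
    refine Finset.ssubset_iff_of_subset ?_ |>.2 ⟨p, by simpa using hp, by simpa using fun _ => hpq⟩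
    exact Finset.monotone_filter_right A fun r _ => hpq.le.trans
  exact ⟨hmaps, hinj, Finset.surjOn_of_injOn_of_card_le _ hmaps hinj (by simp)⟩

section GeneratingTree

variable {X : ℕ → Type*} {S : Type*}

/-- A generating tree with succession rule `step`: `X m` is the `m`-th level, and the children of
a node labelled `s` carry each label `t` with `step s t` exactly once. -/
structure IsGeneratingTree (step : S → S → Prop) (root : S) (label : ∀ m, X m → S)
    (parent : ∀ m, X (m + 1) → X m) : Prop where
  bijOn_root : Set.BijOn (label 0) Set.univ {root}
  bijOn_children : ∀ m x, Set.BijOn (label (m + 1)) (parent m ⁻¹' {x}) {t | step (label m x) t}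

/-- The labels met on the way from the root of a generating tree to a node. -/
def ancestry (label : ∀ m, X m → S) (parent : ∀ m, X (m + 1) → X m) : ∀ m, X m → List S
  | 0, x => [label 0 x]
  | m + 1, x => ancestry label parent m (parent m x) ++ [label (m + 1) x]

variable {step : S → S → Prop} {root : S} {label : ∀ m, X m → S} {parent : ∀ m, X (m + 1) → X m}

theorem getLast?_ancestry (m : ℕ) (x : X m) :
    (ancestry label parent m x).getLast? = some (label m x) := by
  cases m <;> simp [ancestry]

/-- The label sequences with `m` steps allowed by a succession rule. -/
def IsPath (step : S → S → Prop) (root : S) (m : ℕ) (l : List S) : Prop :=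
  l.length = m + 1 ∧ l.head? = some root ∧ l.IsChain step

theorem isPath_zero_iff {l : List S} : IsPath step root 0 l ↔ l = [root] := by
  refine ⟨fun ⟨hlen, hroot, _⟩ => ?_, by rintro rfl; exact ⟨rfl, rfl, .singleton _⟩⟩
  obtain ⟨s, rfl⟩ := List.length_eq_one_iff.1 hlen
  simpa using hroot

theorem isPath_append_singleton_iff {m : ℕ} {l : List S} {s t : S} (hl : l.getLast? = some s) :
    IsPath step root (m + 1) (l ++ [t]) ↔ IsPath step root m l ∧ step s t := by
  obtain ⟨l, rfl⟩ := List.getLast?_eq_some_iff.1 hl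
  unfold IsPath
  rw [List.isChain_append, List.head?_append_of_ne_nil _ (by simp)]
  simp [and_assoc]

theorem IsGeneratingTree.isPath_ancestry (h : IsGeneratingTree step root label parent) (m : ℕ)
    (x : X m) : IsPath step root m (ancestry label parent m x) := by
  induction m with
  | zero => exact isPath_zero_iff.2 (congrArg (fun s => [s]) (h.bijOn_root.mapsTo (Set.mem_univ x)))
  | succ m ih =>
    exact (isPath_append_singleton_iff (getLast?_ancestry m (parent m x))).2
      ⟨ih _, (h.bijOn_children m (parent m x)).mapsTo rfl⟩

theorem IsGeneratingTree.ancestry_injective (h : IsGeneratingTree step root label parent) (m : ℕ) :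
    Function.Injective (ancestry label parent m) := by
  induction m with
  | zero =>
    intro x y hxy
    exact h.bijOn_root.injOn (Set.mem_univ x) (Set.mem_univ y) (List.singleton_inj.1 hxy)
  | succ m ih =>
    intro x y hxy
    obtain ⟨hparent, hlabel⟩ := List.append_inj' hxy rfl
    exact (h.bijOn_children m (parent m y)).injOn (ih hparent) rfl (List.singleton_inj.1 hlabel)

theorem IsGeneratingTree.exists_ancestry_eq (h : IsGeneratingTree step root label parent) {m : ℕ}
    {l : List S} (hl : IsPath step root m l) : ∃ x, ancestry label parent m x = l := by
  induction m generalizing l with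
  | zero =>
    obtain ⟨x, -, hx⟩ := h.bijOn_root.surjOn rfl
    exact ⟨x, (congrArg (fun s => [s]) hx).trans (isPath_zero_iff.1 hl).symm⟩
  | succ m ih =>
    obtain rfl | ⟨l, t, rfl⟩ := l.eq_nil_or_concat'
    · exact absurd hl.1 (by simp)
    have hne : l ≠ [] := by
      rintro rfl
      exact absurd hl.1 (by simp)
    obtain ⟨s, hs⟩ : ∃ s, l.getLast? = some s := ⟨_, List.getLast?_eq_some_getLast hne⟩
    obtain ⟨hl, hst⟩ := (isPath_append_singleton_iff hs).1 hl
    obtain ⟨x, rfl⟩ := ih hl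
    obtain rfl : label m x = s := Option.some_inj.1 ((getLast?_ancestry m x).symm.trans hs)
    obtain ⟨y, rfl, rfl⟩ := (h.bijOn_children m x).surjOn hst
    exact ⟨y, rfl⟩

theorem IsGeneratingTree.card_level (h : IsGeneratingTree step root label parent) (m : ℕ) :
    Nat.card (X m) = Nat.card {l // IsPath step root m l} :=
  Nat.card_congr <| Equiv.ofBijective
    (fun x => ⟨ancestry label parent m x, h.isPath_ancestry m x⟩)
    ⟨fun _ _ hxy => h.ancestry_injective m (Subtype.ext_iff.1 hxy), fun ⟨_, hl⟩ =>
      (h.exists_ancestry_eq hl).imp fun _ => Subtype.ext⟩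

end GeneratingTree

section FaceVal

variable {n i j : ℕ} (σ : Equiv.Perm (Fin n))

theorem faceVal_of_lt (hi : i < n) : faceVal σ i = σ ⟨i, hi⟩ :=
  dif_pos hi

theorem faceVal_lt (hi : i < n) : faceVal σ i < n := by
  rw [faceVal_of_lt σ hi]
  exact (σ _).isLt

theorem faceVal_inj (hi : i < n) (hj : j < n) : faceVal σ i = faceVal σ j ↔ i = j := by
  rw [faceVal_of_lt σ hi, faceVal_of_lt σ hj, Fin.val_inj, σ.injective.eq_iff, Fin.mk.injEq]

theorem exists_faceVal_eq {k : ℕ} (hk : k < n) : ∃ i < n, faceVal σ i = k :=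
  ⟨σ.symm ⟨k, hk⟩, (σ.symm _).isLt, by simp [faceVal_of_lt]⟩

end FaceVal

section Gaps

/-- The crease joining layers `a` and `b` passes over the gap `g`. Gap `g` lies directly below
layer `g`, so that the gaps of a stack of `n` layers are numbered `0, …, n`. -/
def CoversGap (a b g : ℕ) : Prop := min a b < g ∧ g ≤ max a b

theorem strictlyBetween_iff_coversGap {x a b : ℕ} (ha : x ≠ a) (hb : x ≠ b) :
    StrictlyBetween x a b ↔ CoversGap a b x := by
  unfold StrictlyBetween CoversGap
  omega

theorem coversGap_iff_coversGap_comm {a b c d : ℕ} (hac : a ≠ c) (had : a ≠ d) (hbc : b ≠ c)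
    (hbd : b ≠ d) : (CoversGap a b c ↔ CoversGap a b d) ↔ (CoversGap c d a ↔ CoversGap c d b) := by
  unfold CoversGap
  omega

/-- Crease `(i, i + 1)` of the layer ordering `σ` passes over the gap `g`. -/
def CreaseCovers {n : ℕ} (σ : Equiv.Perm (Fin n)) (i g : ℕ) : Prop :=
  CoversGap (faceVal σ i) (faceVal σ (i + 1)) g

/-- The gaps `g` and `h` lie in the same region of the side of the stack that carries the creases
of the parity of `s`. Noncrossing arcs cut that side into regions, and a region is determined by
the arcs that pass over it. -/
def SameRegion {n : ℕ} (s : ℕ) (σ : Equiv.Perm (Fin n)) (g h : ℕ) : Prop :=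
  ∀ i, i + 1 < n → i % 2 = s % 2 → (CreaseCovers σ i g ↔ CreaseCovers σ i h)

section SameRegion

variable {n s g h k : ℕ} {σ : Equiv.Perm (Fin n)}

theorem SameRegion.refl (s : ℕ) (σ : Equiv.Perm (Fin n)) (g : ℕ) : SameRegion s σ g g :=
  fun _ _ _ => Iff.rfl

theorem SameRegion.symm (hgh : SameRegion s σ g h) :
    SameRegion s σ h g :=
  fun i hi hs => (hgh i hi hs).symm

theorem SameRegion.trans (hgh : SameRegion s σ g h)
    (hhk : SameRegion s σ h k) : SameRegion s σ g k :=
  fun i hi hs => (hgh i hi hs).trans (hhk i hi hs)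

theorem sameRegion_add_two :
    SameRegion (s + 2) σ g h ↔ SameRegion s σ g h := by
  simp only [SameRegion, Nat.add_mod_right]

end SameRegion

theorem noCrossings_iff {n : ℕ} {σ : Equiv.Perm (Fin n)} :
    NoCrossings n σ ↔ ∀ j, j + 1 < n → ∀ i < j, i % 2 = j % 2 →
      (CreaseCovers σ i (faceVal σ j) ↔ CreaseCovers σ i (faceVal σ (j + 1))) := by
  have not_xor_iff : ∀ i j, i + 1 < n → j + 1 < n → i % 2 = j % 2 → i ≠ j →
      (¬ Xor (StrictlyBetween (faceVal σ j) (faceVal σ i) (faceVal σ (i + 1)))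
          (StrictlyBetween (faceVal σ (j + 1)) (faceVal σ i) (faceVal σ (i + 1))) ↔
        (CreaseCovers σ i (faceVal σ j) ↔ CreaseCovers σ i (faceVal σ (j + 1)))) := by
    intro i j hi hj hij hne
    rw [not_xor, strictlyBetween_iff_coversGap, strictlyBetween_iff_coversGap] <;>
      first | rfl | (rw [Ne, faceVal_inj] <;> omega)
  constructor
  · intro h j hj i hij hpar
    exact (not_xor_iff i j (by omega) hj hpar hij.ne).1 (h i j (by omega) hj hpar)
  · intro h i j hi hj hpar
    rcases lt_trichotomy i j with hij | rfl | hij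
    · exact (not_xor_iff i j hi hj hpar hij.ne).2 (h j hj i hij hpar)
    · exact (not_xor _ _).2 (by unfold StrictlyBetween; omega)
    · refine (not_xor_iff i j hi hj hpar hij.ne').2 ?_
      refine (coversGap_iff_coversGap_comm ?_ ?_ ?_ ?_).1 (h i hi j hij hpar.symm) <;>
        rw [Ne, faceVal_inj] <;> omega

end Gaps

section Assignments

/-- The assignment `μ` makes crease `(i, i + 1)` go down, from face `i` to a lower face `i + 1`. -/
def Descends (μ : ℕ → MV) (i : ℕ) : Prop :=
  (μ i = MV.M ∧ Even i) ∨ (μ i = MV.V ∧ Odd i)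

theorem mvRelations_iff {n : ℕ} {μ : ℕ → MV} {σ : Equiv.Perm (Fin n)} :
    MVRelations n μ σ ↔ ∀ i, i + 1 < n → (faceVal σ (i + 1) < faceVal σ i ↔ Descends μ i) := by
  refine forall₂_congr fun i hi => ?_
  have hne : faceVal σ (i + 1) ≠ faceVal σ i := by
    rw [Ne, faceVal_inj σ hi (by omega)]
    omega
  unfold Descends
  split_ifs with h
  · simp only [h, iff_true]
  · simp only [h, iff_false]
    omega

/-- The mirror image of an assignment: mountains and valleys are exchanged. -/
def mirror (μ : ℕ → MV) : ℕ → MV := fun i => if μ i = MV.M then MV.V else MV.M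

theorem descends_mirror_iff {μ : ℕ → MV} {i : ℕ} : Descends (mirror μ) i ↔ ¬ Descends μ i := by
  unfold Descends mirror
  cases μ i <;> simp

end Assignments

section Reverse

variable {n : ℕ}

/-- The layer ordering obtained by turning the stack upside down. -/
def reverse (σ : Equiv.Perm (Fin n)) : Equiv.Perm (Fin n) := σ.trans Fin.revPerm

theorem reverse_reverse (σ : Equiv.Perm (Fin n)) : reverse (reverse σ) = σ := by
  ext i
  simp [reverse]

theorem reverse_injective : Function.Injective (reverse : Equiv.Perm (Fin n) → _) :=
  Function.LeftInverse.injective reverse_reverse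

theorem faceVal_reverse (σ : Equiv.Perm (Fin n)) {i : ℕ} (hi : i < n) :
    faceVal (reverse σ) i = n - 1 - faceVal σ i := by
  rw [faceVal_of_lt _ hi, faceVal_of_lt σ hi]
  simp only [reverse, Equiv.trans_apply, Fin.revPerm_apply, Fin.val_rev]
  omega

theorem creaseCovers_reverse (σ : Equiv.Perm (Fin n)) {i g : ℕ} (hi : i + 1 < n) (hg : g ≤ n) :
    CreaseCovers (reverse σ) i g ↔ CreaseCovers σ i (n - g) := by
  have := faceVal_lt σ hi
  have := faceVal_lt σ (i.lt_succ_self.trans hi)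
  unfold CreaseCovers CoversGap
  rw [faceVal_reverse σ hi, faceVal_reverse σ (i.lt_succ_self.trans hi)]
  omega

theorem sameRegion_reverse {s : ℕ} {σ : Equiv.Perm (Fin n)} {g h : ℕ} (hg : g ≤ n) (hh : h ≤ n) :
    SameRegion s (reverse σ) g h ↔ SameRegion s σ (n - g) (n - h) := by
  refine forall₂_congr fun i hi => ?_
  rw [creaseCovers_reverse σ hi hg, creaseCovers_reverse σ hi hh]

theorem mvRelations_mirror_reverse {μ : ℕ → MV} {σ : Equiv.Perm (Fin n)} :
    MVRelations n (mirror μ) (reverse σ) ↔ MVRelations n μ σ := by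
  rw [mvRelations_iff, mvRelations_iff]
  refine forall₂_congr fun i hi => ?_
  have := faceVal_lt σ hi
  have := faceVal_inj σ hi (i.lt_succ_self.trans hi)
  rw [descends_mirror_iff, faceVal_reverse σ hi, faceVal_reverse σ (i.lt_succ_self.trans hi)]
  grind

theorem strictlyBetween_reverse (σ : Equiv.Perm (Fin n)) {i j k : ℕ} (hi : i < n) (hj : j < n)
    (hk : k < n) :
    StrictlyBetween (faceVal (reverse σ) k) (faceVal (reverse σ) i) (faceVal (reverse σ) j) ↔
      StrictlyBetween (faceVal σ k) (faceVal σ i) (faceVal σ j) := by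
  have := faceVal_lt σ hi
  have := faceVal_lt σ hj
  rw [faceVal_reverse σ hi, faceVal_reverse σ hj, faceVal_reverse σ hk]
  unfold StrictlyBetween
  omega

theorem noCrossings_reverse {σ : Equiv.Perm (Fin n)} :
    NoCrossings n (reverse σ) ↔ NoCrossings n σ := by
  refine forall₂_congr fun i j => forall₃_congr fun hi hj _ => ?_
  rw [strictlyBetween_reverse σ (by omega) hi (by omega),
    strictlyBetween_reverse σ (by omega) hi hj]

theorem validLayerOrdering_mirror_reverse {μ : ℕ → MV} {σ : Equiv.Perm (Fin n)} :
    ValidLayerOrdering n (mirror μ) (reverse σ) ↔ ValidLayerOrdering n μ σ :=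
  and_congr mvRelations_mirror_reverse noCrossings_reverse

theorem foldCount_mirror (n : ℕ) (μ : ℕ → MV) : foldCount n (mirror μ) = foldCount n μ :=
  Nat.card_congr <| Equiv.symm <|
    Equiv.subtypeEquiv ⟨reverse, reverse, reverse_reverse, reverse_reverse⟩
      fun _ => validLayerOrdering_mirror_reverse.symm

end Reverse

section Insertion

/-- The position, after a new layer has been inserted into gap `p`, of the layer that was at
position `x`. It is `Fin.succAbove` on natural numbers. -/
def shiftAbove (p x : ℕ) : ℕ := if x < p then x else x + 1

/-- The gap containing gap `g` once the layer at position `p` is removed, so that the two gaps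
next to that layer are merged. -/
def mergeGap (p g : ℕ) : ℕ := if g ≤ p then g else g - 1

theorem mergeGap_of_le {p g : ℕ} (h : g ≤ p) : mergeGap p g = g :=
  if_pos h

theorem mergeGap_of_lt {p g : ℕ} (h : p < g) : mergeGap p g = g - 1 :=
  if_neg h.not_ge

theorem coversGap_shiftAbove {p a b g : ℕ} :
    CoversGap (shiftAbove p a) (shiftAbove p b) g ↔ CoversGap a b (mergeGap p g) := by
  unfold CoversGap shiftAbove mergeGap
  split_ifs <;> omega

theorem shiftAbove_lt_shiftAbove {p a b : ℕ} : shiftAbove p a < shiftAbove p b ↔ a < b := by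
  unfold shiftAbove
  split_ifs <;> omega

theorem lt_shiftAbove_self {p x : ℕ} : p < shiftAbove p x ↔ p ≤ x := by
  unfold shiftAbove
  split_ifs <;> omega

theorem mergeGap_shiftAbove (p x : ℕ) : mergeGap p (shiftAbove p x) = x := by
  unfold mergeGap shiftAbove
  split_ifs <;> omega

theorem mergeGap_self (p : ℕ) : mergeGap p p = p :=
  if_pos le_rfl

variable {n : ℕ}

/-- Attach a new last face `n` to the strip and put it into gap `p` of the stack. -/
def insertLast (p : Fin (n + 1)) (σ : Equiv.Perm (Fin n)) : Equiv.Perm (Fin (n + 1)) :=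
  finSuccEquivLast.trans (σ.optionCongr.trans (finSuccEquiv' p).symm)

theorem insertLast_last (p : Fin (n + 1)) (σ : Equiv.Perm (Fin n)) :
    insertLast p σ (Fin.last n) = p := by
  simp [insertLast]

theorem insertLast_bijective :
    Function.Bijective fun x : Fin (n + 1) × Equiv.Perm (Fin n) => insertLast x.1 x.2 := by
  refine (Fintype.bijective_iff_injective_and_card _).2 ⟨?_, ?_⟩
  · rintro ⟨p, σ⟩ ⟨q, τ⟩ (h : insertLast p σ = insertLast q τ)
    obtain rfl : p = q := by rw [← insertLast_last p σ, h, insertLast_last]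
    have hσ : σ.optionCongr = τ.optionCongr := by
      ext1 x
      have := DFunLike.congr_fun h (finSuccEquivLast.symm x)
      simpa [insertLast] using this
    rw [Equiv.optionCongr_injective hσ]
  · simp [Fintype.card_perm, Nat.factorial_succ]

theorem insertLast_inj {p q : Fin (n + 1)} {σ τ : Equiv.Perm (Fin n)} :
    insertLast p σ = insertLast q τ ↔ p = q ∧ σ = τ :=
  (insertLast_bijective.injective.eq_iff (a := (p, σ)) (b := (q, τ))).trans Prod.mk_inj

theorem exists_insertLast_eq (τ : Equiv.Perm (Fin (n + 1))) : ∃ p σ, insertLast p σ = τ :=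
  Prod.exists.1 (insertLast_bijective.surjective τ)

theorem faceVal_insertLast_last (p : Fin (n + 1)) (σ : Equiv.Perm (Fin n)) :
    faceVal (insertLast p σ) n = p := by
  rw [faceVal_of_lt _ n.lt_succ_self]
  exact congrArg Fin.val (insertLast_last p σ)

theorem faceVal_insertLast_of_lt (p : Fin (n + 1)) (σ : Equiv.Perm (Fin n)) {i : ℕ} (hi : i < n) :
    faceVal (insertLast p σ) i = shiftAbove p (faceVal σ i) := by
  have hcast : finSuccEquivLast (⟨i, hi.trans n.lt_succ_self⟩ : Fin (n + 1)) = some ⟨i, hi⟩ :=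
    finSuccEquivLast_castSucc ⟨i, hi⟩
  rw [faceVal_of_lt σ hi, faceVal_of_lt _ (hi.trans n.lt_succ_self)]
  simp only [insertLast, Equiv.trans_apply, hcast, Equiv.optionCongr_apply, Option.map_some,
    finSuccEquiv'_symm_some, Fin.succAbove, shiftAbove, Fin.lt_def, Fin.val_castSucc]
  split_ifs <;> rfl

theorem creaseCovers_insertLast_of_lt (p : Fin (n + 1)) (σ : Equiv.Perm (Fin n)) {i g : ℕ}
    (hi : i + 1 < n) : CreaseCovers (insertLast p σ) i g ↔ CreaseCovers σ i (mergeGap p g) := by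
  unfold CreaseCovers
  rw [faceVal_insertLast_of_lt p σ hi, faceVal_insertLast_of_lt p σ (by omega),
    coversGap_shiftAbove]

theorem creaseCovers_insertLast_last (p : Fin (n + 2)) (σ : Equiv.Perm (Fin (n + 1))) {g : ℕ} :
    CreaseCovers (insertLast p σ) n g ↔ CoversGap (shiftAbove p (faceVal σ n)) p g := by
  unfold CreaseCovers
  rw [faceVal_insertLast_of_lt p σ n.lt_succ_self, faceVal_insertLast_last]

theorem sameRegion_insertLast_iff {s : ℕ} {p : Fin (n + 2)} {σ : Equiv.Perm (Fin (n + 1))}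
    {g h : ℕ} :
    SameRegion s (insertLast p σ) g h ↔
      SameRegion s σ (mergeGap p g) (mergeGap p h) ∧ (n % 2 = s % 2 →
        (CoversGap (shiftAbove p (faceVal σ n)) p g ↔
          CoversGap (shiftAbove p (faceVal σ n)) p h)) := by
  rw [← creaseCovers_insertLast_last, ← creaseCovers_insertLast_last]
  constructor
  · refine fun hreg => ⟨fun i hi hs => ?_, hreg n (by omega)⟩
    rw [← creaseCovers_insertLast_of_lt p σ hi, ← creaseCovers_insertLast_of_lt p σ hi]
    exact hreg i (by omega) hs
  · rintro ⟨hold, hnew⟩ i hi hs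
    obtain hi | rfl : i + 1 < n + 1 ∨ i = n := by omega
    · rw [creaseCovers_insertLast_of_lt p σ hi, creaseCovers_insertLast_of_lt p σ hi]
      exact hold i hi hs
    · exact hnew hs

theorem sameRegion_insertLast_iff_of_ne {s : ℕ} {p : Fin (n + 2)} {σ : Equiv.Perm (Fin (n + 1))}
    {g h : ℕ} (hs : n % 2 ≠ s % 2) :
    SameRegion s (insertLast p σ) g h ↔ SameRegion s σ (mergeGap p g) (mergeGap p h) := by
  rw [sameRegion_insertLast_iff, and_iff_left fun h => absurd h hs]

theorem creaseCovers_insertLast_faceVal (p : Fin (n + 1)) (σ : Equiv.Perm (Fin n)) {i j : ℕ}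
    (hi : i + 1 < n) (hj : j < n) :
    CreaseCovers (insertLast p σ) i (faceVal (insertLast p σ) j) ↔
      CreaseCovers σ i (faceVal σ j) := by
  rw [creaseCovers_insertLast_of_lt p σ hi, faceVal_insertLast_of_lt p σ hj, mergeGap_shiftAbove]

theorem forall_succ_lt_add_two {P : ℕ → Prop} :
    (∀ i, i + 1 < n + 2 → P i) ↔ (∀ i, i + 1 < n + 1 → P i) ∧ P n := by
  simp only [Nat.succ_lt_succ_iff, Nat.forall_lt_succ_right]

theorem mvRelations_insertLast_iff {μ : ℕ → MV} {p : Fin (n + 2)}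
    {σ : Equiv.Perm (Fin (n + 1))} :
    MVRelations (n + 2) μ (insertLast p σ) ↔
      MVRelations (n + 1) μ σ ∧ (p ≤ faceVal σ n ↔ Descends μ n) := by
  rw [mvRelations_iff, mvRelations_iff, forall_succ_lt_add_two]
  refine and_congr (forall₂_congr fun i hi => ?_) ?_
  · rw [faceVal_insertLast_of_lt p σ hi, faceVal_insertLast_of_lt p σ (by omega),
      shiftAbove_lt_shiftAbove]
  · rw [faceVal_insertLast_last, faceVal_insertLast_of_lt p σ n.lt_succ_self, lt_shiftAbove_self]

theorem noCrossings_insertLast_iff {p : Fin (n + 2)} {σ : Equiv.Perm (Fin (n + 1))} :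
    NoCrossings (n + 2) (insertLast p σ) ↔
      NoCrossings (n + 1) σ ∧ SameRegion n σ p (faceVal σ n) := by
  rw [noCrossings_iff, noCrossings_iff, forall_succ_lt_add_two]
  refine and_congr (forall₂_congr fun j hj => forall₃_congr fun i hi _ => ?_)
    ⟨fun h i hi hpar => ?_, fun h i hi hpar => ?_⟩
  · rw [creaseCovers_insertLast_faceVal p σ (by omega) (by omega),
      creaseCovers_insertLast_faceVal p σ (by omega) hj]
  · have := h i (by omega) hpar
    rw [creaseCovers_insertLast_faceVal p σ hi n.lt_succ_self, faceVal_insertLast_last,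
      creaseCovers_insertLast_of_lt p σ hi, mergeGap_self] at this
    exact this.symm
  · have : i ≠ n := by omega
    rw [creaseCovers_insertLast_faceVal p σ (by omega) n.lt_succ_self, faceVal_insertLast_last,
      creaseCovers_insertLast_of_lt p σ (by omega), mergeGap_self]
    exact (h i (by omega) hpar).symm

theorem validLayerOrdering_insertLast_iff {μ : ℕ → MV} {p : Fin (n + 2)}
    {σ : Equiv.Perm (Fin (n + 1))} :
    ValidLayerOrdering (n + 2) μ (insertLast p σ) ↔
      ValidLayerOrdering (n + 1) μ σ ∧ (p ≤ faceVal σ n ↔ Descends μ n) ∧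
        SameRegion n σ p (faceVal σ n) := by
  unfold ValidLayerOrdering
  rw [mvRelations_insertLast_iff, noCrossings_insertLast_iff]
  exact and_and_and_comm

end Insertion

section Growth

variable {n : ℕ} {σ : Equiv.Perm (Fin (n + 1))} {p : Fin (n + 2)} {g : ℕ} {μ : ℕ → MV}

open Classical in
/-- The gaps above the last face `n` that a crease leaving the gap directly below that face can
reach on the side of crease `n + 1`. The gap directly below the last face is counted. -/
noncomputable def gapsAbove (σ : Equiv.Perm (Fin (n + 1))) : Finset ℕ :=
  {g ∈ Finset.range (n + 2) | faceVal σ n ≤ g ∧ SameRegion (n + 1) σ g (faceVal σ n)}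

open Classical in
/-- The gaps below the last face `n` that a crease leaving the gap directly below that face can
reach on the side of crease `n + 1`. The gap directly below the last face is counted. -/
noncomputable def gapsBelow (σ : Equiv.Perm (Fin (n + 1))) : Finset ℕ :=
  {g ∈ Finset.range (n + 2) | g ≤ faceVal σ n ∧ SameRegion (n + 1) σ g (faceVal σ n)}

theorem mem_gapsAbove : g ∈ gapsAbove σ ↔
    g ≤ n + 1 ∧ faceVal σ n ≤ g ∧ SameRegion (n + 1) σ g (faceVal σ n) := by
  simp [gapsAbove, Nat.lt_succ_iff]

theorem mem_gapsBelow : g ∈ gapsBelow σ ↔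
    g ≤ n + 1 ∧ g ≤ faceVal σ n ∧ SameRegion (n + 1) σ g (faceVal σ n) := by
  simp [gapsBelow, Nat.lt_succ_iff]

/-- Attach two faces to the strip, the first directly below the last face `n`, the second
into gap `p` of the old stack, at or above face `n + 1`; then turn the stack upside down, so that
the next pair of faces can be attached in the same way. -/
def grow (p : Fin (n + 2)) (σ : Equiv.Perm (Fin (n + 1))) : Equiv.Perm (Fin (n + 3)) :=
  reverse (insertLast p.succ (insertLast (σ (Fin.last n)).castSucc σ))

theorem grow_inj {q : Fin (n + 2)} {τ : Equiv.Perm (Fin (n + 1))} :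
    grow p σ = grow q τ ↔ p = q ∧ σ = τ := by
  refine ⟨fun h => ?_, by rintro ⟨rfl, rfl⟩; rfl⟩
  obtain ⟨hp, hσ⟩ := insertLast_inj.1 (reverse_injective h)
  exact ⟨Fin.succ_injective _ hp, (insertLast_inj.1 hσ).2⟩

theorem coe_castSucc_last (σ : Equiv.Perm (Fin (n + 1))) :
    ((σ (Fin.last n)).castSucc : ℕ) = faceVal σ n :=
  (faceVal_of_lt σ n.lt_succ_self).symm

theorem validLayerOrdering_grow_iff (hdesc : Descends μ n) (hasc : ¬ Descends μ (n + 1)) :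
    ValidLayerOrdering (n + 3) (mirror μ) (grow p σ) ↔
      ValidLayerOrdering (n + 1) μ σ ∧ ↑p ∈ gapsAbove σ := by
  have hp := p.is_le
  rw [grow, validLayerOrdering_mirror_reverse, validLayerOrdering_insertLast_iff,
    validLayerOrdering_insertLast_iff, faceVal_insertLast_last,
    sameRegion_insertLast_iff_of_ne (by omega), mem_gapsAbove, coe_castSucc_last, mergeGap_self,
    Fin.val_succ]
  simp only [hdesc, hasc, iff_false, not_le, Nat.lt_succ_iff, le_refl, SameRegion.refl, true_and,
    and_true, hp]
  refine and_congr_right fun _ => and_congr_right fun hle => ?_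
  rw [mergeGap_of_lt (by omega), Nat.add_sub_cancel]

theorem faceVal_grow_last : faceVal (grow p σ) (n + 2) = n + 1 - p := by
  rw [grow, faceVal_reverse _ (by omega), faceVal_insertLast_last, Fin.val_succ]
  omega

theorem faceVal_grow_succ (hp : faceVal σ n ≤ p) :
    faceVal (grow p σ) (n + 1) = n + 2 - faceVal σ n := by
  rw [grow, faceVal_reverse _ (by omega), faceVal_insertLast_of_lt _ _ (by omega),
    faceVal_insertLast_last, coe_castSucc_last, Fin.val_succ, shiftAbove, if_pos (by omega)]
  rfl

theorem faceVal_grow_of_le {i : ℕ} (hi : i ≤ n) :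
    faceVal (grow p σ) i =
      n + 2 - shiftAbove (p + 1) (shiftAbove (faceVal σ n) (faceVal σ i)) := by
  rw [grow, faceVal_reverse _ (by omega), faceVal_insertLast_of_lt _ _ (by omega),
    faceVal_insertLast_of_lt _ _ (by omega), coe_castSucc_last, Fin.val_succ]
  rfl

theorem sameRegion_grow_iff (hp : ↑p ∈ gapsAbove σ) (hg : g ≤ n + 3) :
    SameRegion (n + 3) (grow p σ) g (faceVal (grow p σ) (n + 2)) ↔
      (n + 3 ≤ faceVal σ n + g ∧ SameRegion (n + 1) σ (n + 3 - g) (faceVal σ n)) ∨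
        (p + g ≤ n + 1 ∧ SameRegion (n + 1) σ (n + 1 - g) (faceVal σ n)) := by
  obtain ⟨hpn, hcp, hreg⟩ := mem_gapsAbove.1 hp
  have hp_iff : ∀ h, SameRegion (n + 1) σ h p ↔ SameRegion (n + 1) σ h (faceVal σ n) :=
    fun h => ⟨fun h => h.trans hreg, fun h => h.trans hreg.symm⟩
  have hshift : shiftAbove (p + 1) (faceVal σ n) = faceVal σ n := if_pos (by omega)
  have hcovers : ∀ h, CoversGap (faceVal σ n) (p + 1) h ↔ faceVal σ n < h ∧ h ≤ p + 1 :=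
    fun h => by unfold CoversGap; omega
  have hmerge : mergeGap (faceVal σ n) (mergeGap (p + 1) (p + 2)) = p := by
    rw [mergeGap_of_lt (p := p + 1) (by omega), mergeGap_of_lt (by omega)]
    rfl
  rw [faceVal_grow_last, grow, sameRegion_reverse hg (by omega),
    show n + 3 - (n + 1 - p) = p + 2 by omega, sameRegion_insertLast_iff,
    sameRegion_insertLast_iff_of_ne (by omega), faceVal_insertLast_last, coe_castSucc_last,
    Fin.val_succ, hshift, hmerge, sameRegion_add_two, hp_iff, hcovers, hcovers,
    forall_prop_of_true (by omega)]
  obtain h | h | h : n + 3 ≤ faceVal σ n + g ∨ n + 3 < p + 2 + g ∧ faceVal σ n + g < n + 3 ∨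
    p + 2 + g ≤ n + 3 := by omega
  · rw [mergeGap_of_le (p := p + 1) (by omega), mergeGap_of_le (by omega)]
    grind
  · grind
  · rw [mergeGap_of_lt (p := p + 1) (by omega), mergeGap_of_lt (by omega)]
    grind

theorem gapsAbove_grow (hp : ↑p ∈ gapsAbove σ) :
    gapsAbove (grow p σ) = insert (n + 1 - p : ℕ) ((gapsBelow σ).image (n + 3 - ·)) := by
  obtain ⟨hpn, hcp, -⟩ := mem_gapsAbove.1 hp
  ext g
  simp only [mem_gapsAbove, Finset.mem_insert, Finset.mem_image, mem_gapsBelow]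
  constructor
  · rintro ⟨hgn, hpg, hg⟩
    rw [faceVal_grow_last] at hpg
    obtain ⟨hgc, hg⟩ | ⟨hgp, -⟩ := (sameRegion_grow_iff hp hgn).1 hg
    · exact .inr ⟨n + 3 - g, ⟨by omega, by omega, hg⟩, by omega⟩
    · exact .inl (by omega)
  · rintro (rfl | ⟨h, ⟨-, hhc, hreg⟩, rfl⟩)
    · rw [faceVal_grow_last]
      exact ⟨by omega, le_rfl, .refl _ _ _⟩
    · refine ⟨by omega, by rw [faceVal_grow_last]; omega, (sameRegion_grow_iff hp (by omega)).2 ?_⟩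
      exact .inl ⟨by omega, by rwa [Nat.sub_sub_self (by omega)]⟩

theorem gapsBelow_grow (hp : ↑p ∈ gapsAbove σ) :
    gapsBelow (grow p σ) = {g ∈ gapsAbove σ | ↑p ≤ g}.image (n + 1 - ·) := by
  obtain ⟨hpn, hcp, -⟩ := mem_gapsAbove.1 hp
  ext g
  simp only [mem_gapsBelow, Finset.mem_image, Finset.mem_filter, mem_gapsAbove]
  constructor
  · rintro ⟨hgn, hpg, hg⟩
    rw [faceVal_grow_last] at hpg
    obtain ⟨hgc, -⟩ | ⟨hgp, hg⟩ := (sameRegion_grow_iff hp hgn).1 hg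
    · omega
    · exact ⟨n + 1 - g, ⟨⟨by omega, by omega, hg⟩, by omega⟩, by omega⟩
  · rintro ⟨h, ⟨⟨hhn, -, hreg⟩, hph⟩, rfl⟩
    refine ⟨by omega, by rw [faceVal_grow_last]; omega, (sameRegion_grow_iff hp (by omega)).2 ?_⟩
    exact .inr ⟨by omega, by rwa [Nat.sub_sub_self (by omega)]⟩

theorem card_gapsAbove_grow (hp : ↑p ∈ gapsAbove σ) :
    (gapsAbove (grow p σ)).card = (gapsBelow σ).card + 1 := by
  obtain ⟨hpn, hcp, -⟩ := mem_gapsAbove.1 hp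
  have hle : ∀ g ∈ gapsBelow σ, g ≤ faceVal σ n := fun g hg => (mem_gapsBelow.1 hg).2.1
  rw [gapsAbove_grow hp, Finset.card_insert_of_notMem, Finset.card_image_of_injOn]
  · intro g hg h hh hgh
    have := hle g hg
    have := hle h hh
    simp only at hgh
    omega
  · rw [Finset.mem_image]
    rintro ⟨g, hg, hgp⟩
    have := hle g hg
    omega

theorem card_gapsBelow_grow (hp : ↑p ∈ gapsAbove σ) :
    (gapsBelow (grow p σ)).card = {g ∈ gapsAbove σ | ↑p ≤ g}.card := by
  rw [gapsBelow_grow hp, Finset.card_image_of_injOn]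
  intro g hg h hh hgh
  have := (mem_gapsAbove.1 (Finset.mem_filter.1 hg).1).1
  have := (mem_gapsAbove.1 (Finset.mem_filter.1 hh).1).1
  simp only at hgh
  omega

/-- The orientation of the boundary of the region around the gap directly below the last face `n`,
on the side of crease `n + 1`, which makes the next insertion below face `n` unique: a face resting
on one of its gaps above the last face is the upper end of its outgoing crease, and a face directly
below one of its gaps below the last face is the lower end. -/
def FrontierOriented (μ : ℕ → MV) (σ : Equiv.Perm (Fin (n + 1))) : Prop :=
  (∀ i ≤ n, faceVal σ i ∈ gapsAbove σ → Descends μ i) ∧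
    ∀ i ≤ n, faceVal σ i + 1 ∈ gapsBelow σ → ¬ Descends μ i

theorem forall_le_add_two {P : ℕ → Prop} :
    (∀ i ≤ n + 2, P i) ↔ (∀ i ≤ n, P i) ∧ P (n + 1) ∧ P (n + 2) := by
  simp only [← Nat.lt_succ_iff, Nat.forall_lt_succ_right, and_assoc]

theorem descends_of_faceVal_grow_add_one_mem (hσ : FrontierOriented μ σ) (hp : ↑p ∈ gapsAbove σ)
    {i : ℕ} (hi : i ≤ n) (h : faceVal (grow p σ) i + 1 ∈ gapsBelow (grow p σ)) :
    Descends μ i := by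
  have := faceVal_lt σ (Nat.lt_succ_iff.2 hi)
  rw [gapsBelow_grow hp, Finset.mem_image, faceVal_grow_of_le hi] at h
  obtain ⟨g, hg, hgi⟩ := h
  obtain ⟨hg, hpg⟩ := Finset.mem_filter.1 hg
  obtain ⟨hgn, hcg, -⟩ := mem_gapsAbove.1 hg
  have : faceVal σ i = g := by
    unfold shiftAbove at hgi
    split_ifs at hgi <;> omega
  exact hσ.1 i hi (this ▸ hg)

theorem not_descends_of_faceVal_grow_mem (hσ : FrontierOriented μ σ) (hp : ↑p ∈ gapsAbove σ)
    {i : ℕ} (hi : i ≤ n) (h : faceVal (grow p σ) i ∈ gapsAbove (grow p σ)) :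
    ¬ Descends μ i := by
  obtain ⟨hpn, hcp, -⟩ := mem_gapsAbove.1 hp
  have hne : faceVal (grow p σ) i ≠ faceVal (grow p σ) (n + 2) := by
    rw [Ne, faceVal_inj _ (by omega) (by omega)]
    omega
  rw [faceVal_grow_last] at hne
  rw [gapsAbove_grow hp, Finset.mem_insert, or_iff_right hne, Finset.mem_image,
    faceVal_grow_of_le hi] at h
  obtain ⟨g, hg, hgi⟩ := h
  obtain ⟨-, hgc, -⟩ := mem_gapsBelow.1 hg
  have : faceVal σ i + 1 = g := by
    unfold shiftAbove at hgi
    split_ifs at hgi <;> omega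
  exact hσ.2 i hi (this ▸ hg)

theorem FrontierOriented.grow (hσ : FrontierOriented μ σ) (hp : ↑p ∈ gapsAbove σ)
    (hasc : ¬ Descends μ (n + 1)) (hasc' : ¬ Descends μ (n + 2)) :
    FrontierOriented (mirror μ) (grow p σ) := by
  obtain ⟨hpn, hcp, -⟩ := mem_gapsAbove.1 hp
  have hle : ∀ g ∈ gapsBelow (StampFolding.grow p σ), g ≤ n + 1 - p := fun g hg =>
    (mem_gapsBelow.1 hg).2.1.trans_eq faceVal_grow_last
  unfold FrontierOriented
  simp only [forall_le_add_two, descends_mirror_iff, hasc, hasc', not_false_eq_true, implies_true,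
    and_true, imp_false, not_not]
  refine ⟨fun i => not_descends_of_faceVal_grow_mem hσ hp,
    fun i => descends_of_faceVal_grow_add_one_mem hσ hp, fun h => ?_, fun h => ?_⟩
  · have := hle _ h
    rw [faceVal_grow_succ hcp] at this
    omega
  · have := hle _ h
    rw [faceVal_grow_last] at this
    omega

theorem eq_faceVal_last_of_sameRegion (hn : Even n)
    (hμ : ∀ k, Descends μ (2 * k + 1) ↔ ¬ Descends μ (2 * k)) (hσ : MVRelations (n + 1) μ σ)
    (hσ' : FrontierOriented μ σ) (hg : g ≤ faceVal σ n)
    (hreg : SameRegion n σ g (faceVal σ n)) : g = faceVal σ n := by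
  by_contra hne
  have hc := faceVal_lt σ n.lt_succ_self
  obtain ⟨i, hi, hic⟩ := exists_faceVal_eq σ (k := faceVal σ n - 1) (by omega)
  have hi_asc : ¬ Descends μ i := by
    refine hσ'.2 i (by omega) (mem_gapsBelow.2 ?_)
    rw [show faceVal σ i + 1 = faceVal σ n by omega]
    exact ⟨hc.le, le_rfl, .refl _ _ _⟩
  have hin : i ≠ n := by
    rintro rfl
    omega
  -- The crease through face `i` on the side of crease `n` separates `g` from the last face.
  obtain ⟨k, hk⟩ : ∃ k, i = 2 * k ∨ i = 2 * k + 1 := ⟨i / 2, by omega⟩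
  obtain ⟨l, rfl⟩ := hn
  have hcrease := hreg (2 * k) (by omega) (by omega)
  have hdir := mvRelations_iff.1 hσ (2 * k) (by omega)
  have := faceVal_inj σ (i := 2 * k) (j := 2 * k + 1) (by omega) (by omega)
  unfold CreaseCovers CoversGap at hcrease
  rcases hk with rfl | rfl
  · rw [iff_false_right hi_asc] at hdir
    omega
  · rw [iff_true_right (not_not.1 fun h => hi_asc ((hμ k).2 h))] at hdir
    omega

theorem exists_grow_eq (hn : Even n) (hμ : ∀ k, Descends μ (2 * k + 1) ↔ ¬ Descends μ (2 * k))
    (hdesc : Descends μ n) (hasc : ¬ Descends μ (n + 1))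
    (hfront : ∀ σ, ValidLayerOrdering (n + 1) μ σ → FrontierOriented μ σ)
    {τ : Equiv.Perm (Fin (n + 3))} (hτ : ValidLayerOrdering (n + 3) (mirror μ) τ) :
    ∃ p σ, grow (n := n) p σ = τ := by
  obtain ⟨p, ρ, hρ⟩ := exists_insertLast_eq (reverse τ)
  obtain ⟨q, σ, rfl⟩ := exists_insertLast_eq ρ
  rw [← reverse_reverse τ, validLayerOrdering_mirror_reverse, ← hρ,
    validLayerOrdering_insertLast_iff, validLayerOrdering_insertLast_iff,
    faceVal_insertLast_last] at hτ
  obtain ⟨⟨hσ, hq, hq_reg⟩, hp, -⟩ := hτ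
  have hq_eq : q = (σ (Fin.last n)).castSucc := Fin.ext <| by
    rw [coe_castSucc_last]
    exact eq_faceVal_last_of_sameRegion hn hμ hσ.1 (hfront σ hσ) (hq.2 hdesc) hq_reg
  have hp_ne : p ≠ 0 := by
    rintro rfl
    exact hasc (hp.1 (Nat.zero_le _))
  refine ⟨p.pred hp_ne, σ, ?_⟩
  rw [grow, Fin.succ_pred, ← hq_eq, hρ, reverse_reverse]

end Growth

section TwoAlternating

/-- The 2-alternating assignment in the form it takes after turning the stack upside down `m`
times, once for each pair of faces attached by `grow`. -/
def turnedTwoAlt (m : ℕ) : ℕ → MV := mirror^[m] twoAlt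

theorem turnedTwoAlt_succ (m : ℕ) : turnedTwoAlt (m + 1) = mirror (turnedTwoAlt m) :=
  Function.iterate_succ_apply' mirror m twoAlt

theorem foldCount_turnedTwoAlt (n m : ℕ) : foldCount n (turnedTwoAlt m) = foldCount n twoAlt := by
  induction m with
  | zero => rfl
  | succ m ih => rw [turnedTwoAlt_succ, foldCount_mirror, ih]

theorem descends_turnedTwoAlt_iff (m i : ℕ) :
    Descends (turnedTwoAlt m) i ↔ Even (i / 2 + i + m) := by
  induction m with
  | zero =>
    unfold Descends turnedTwoAlt twoAlt
    by_cases h : Even (i / 2) <;> simp [h, Nat.even_add]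
  | succ m ih => rw [turnedTwoAlt_succ, descends_mirror_iff, ih, ← Nat.add_assoc, Nat.even_add_one]

theorem descends_turnedTwoAlt_odd_iff (m k : ℕ) :
    Descends (turnedTwoAlt m) (2 * k + 1) ↔ ¬ Descends (turnedTwoAlt m) (2 * k) := by
  rw [descends_turnedTwoAlt_iff, descends_turnedTwoAlt_iff]
  grind

theorem descends_turnedTwoAlt_two_mul (m : ℕ) : Descends (turnedTwoAlt m) (2 * m) := by
  rw [descends_turnedTwoAlt_iff]
  grind

theorem not_descends_turnedTwoAlt_succ (m : ℕ) : ¬ Descends (turnedTwoAlt m) (2 * m + 1) := by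
  rw [descends_turnedTwoAlt_odd_iff, not_not]
  exact descends_turnedTwoAlt_two_mul m

theorem not_descends_turnedTwoAlt_add_two (m : ℕ) : ¬ Descends (turnedTwoAlt m) (2 * m + 2) := by
  rw [descends_turnedTwoAlt_iff]
  grind

theorem faceVal_perm_one (σ : Equiv.Perm (Fin 1)) : faceVal σ 0 = 0 :=
  Nat.lt_one_iff.1 (faceVal_lt σ one_pos)

theorem frontierOriented_turnedTwoAlt (m : ℕ) {σ : Equiv.Perm (Fin (2 * m + 1))}
    (hσ : ValidLayerOrdering (2 * m + 1) (turnedTwoAlt m) σ) :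
    FrontierOriented (turnedTwoAlt m) σ := by
  induction m with
  | zero =>
    refine ⟨fun i hi _ => ?_, fun i hi h => ?_⟩
    · rw [Nat.le_zero.1 hi]
      exact descends_turnedTwoAlt_two_mul 0
    · have := (mem_gapsBelow.1 h).2.1
      rw [Nat.le_zero.1 hi] at this
      exact absurd this (Nat.not_succ_le_self _)
  | succ m ih =>
    rw [turnedTwoAlt_succ] at hσ ⊢
    obtain ⟨p, ρ, rfl⟩ := exists_grow_eq (even_two_mul m) (descends_turnedTwoAlt_odd_iff m)
      (descends_turnedTwoAlt_two_mul m) (not_descends_turnedTwoAlt_succ m) (fun _ => ih) hσ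
    obtain ⟨hρ, hp⟩ := (validLayerOrdering_grow_iff (descends_turnedTwoAlt_two_mul m)
      (not_descends_turnedTwoAlt_succ m)).1 hσ
    exact (ih hρ).grow hp (not_descends_turnedTwoAlt_succ m) (not_descends_turnedTwoAlt_add_two m)

theorem exists_grow_eq_of_turnedTwoAlt {m : ℕ} {τ : Equiv.Perm (Fin (2 * m + 3))}
    (hτ : ValidLayerOrdering (2 * m + 3) (turnedTwoAlt (m + 1)) τ) :
    ∃ p σ, grow (n := 2 * m) p σ = τ :=
  exists_grow_eq (even_two_mul m) (descends_turnedTwoAlt_odd_iff m)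
    (descends_turnedTwoAlt_two_mul m) (not_descends_turnedTwoAlt_succ m)
    (fun _ => frontierOriented_turnedTwoAlt m) (turnedTwoAlt_succ m ▸ hτ)

theorem validLayerOrdering_turnedTwoAlt_grow_iff {m : ℕ} {p : Fin (2 * m + 2)}
    {σ : Equiv.Perm (Fin (2 * m + 1))} :
    ValidLayerOrdering (2 * m + 3) (turnedTwoAlt (m + 1)) (grow p σ) ↔
      ValidLayerOrdering (2 * m + 1) (turnedTwoAlt m) σ ∧ ↑p ∈ gapsAbove σ := by
  rw [turnedTwoAlt_succ]
  exact validLayerOrdering_grow_iff (descends_turnedTwoAlt_two_mul m)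
    (not_descends_turnedTwoAlt_succ m)

end TwoAlternating

section FoldingTree

/-- The `m`-th level of the generating tree of folded strips, whose edges are given by `grow`: the
foldings of `2 * m + 1` stamps with the (turned) 2-alternating assignment. -/
abbrev TwoAltFolding (m : ℕ) : Type :=
  {σ : Equiv.Perm (Fin (2 * m + 1)) // ValidLayerOrdering (2 * m + 1) (turnedTwoAlt m) σ}

/-- The point of a walk that corresponds to a folding: the numbers of gaps above and below the
last face that are reachable from the gap directly below it. -/
noncomputable def gapCounts (m : ℕ) (σ : TwoAltFolding m) : ℤ × ℤ :=
  ((gapsAbove σ.1).card, (gapsBelow σ.1).card)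

theorem gapCounts_grow {m : ℕ} {σ : TwoAltFolding m} {τ : TwoAltFolding (m + 1)}
    {p : Fin (2 * m + 2)} (hp : ↑p ∈ gapsAbove σ.1) (hτ : grow p σ.1 = τ.1) :
    gapCounts (m + 1) τ =
      (((gapsBelow σ.1).card + 1 : ℤ), ({g ∈ gapsAbove σ.1 | ↑p ≤ g}.card : ℤ)) := by
  rw [← Nat.cast_add_one, ← card_gapsAbove_grow hp, ← card_gapsBelow_grow hp, hτ]
  rfl

theorem validLayerOrdering_perm_one (μ : ℕ → MV) (σ : Equiv.Perm (Fin 1)) :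
    ValidLayerOrdering 1 μ σ :=
  ⟨fun i hi => by omega, fun i j hi => by omega⟩

theorem gapsAbove_perm_one (σ : Equiv.Perm (Fin 1)) : gapsAbove σ = {0, 1} := by
  ext g
  have hreg : SameRegion (0 + 1) σ g 0 := fun i hi => by omega
  simp only [mem_gapsAbove, hreg, and_true, Finset.mem_insert, Finset.mem_singleton,
    faceVal_perm_one]
  omega

theorem gapsBelow_perm_one (σ : Equiv.Perm (Fin 1)) : gapsBelow σ = {0} := by
  ext g
  have hreg : SameRegion (0 + 1) σ g 0 := fun i hi => by omega
  simp only [mem_gapsBelow, hreg, and_true, Finset.mem_singleton, faceVal_perm_one]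
  omega

theorem gapCounts_zero (σ : TwoAltFolding 0) : gapCounts 0 σ = (2, 1) := by
  have habove : gapsAbove σ.1 = {0, 1} := gapsAbove_perm_one σ.1
  have hbelow : gapsBelow σ.1 = {0} := gapsBelow_perm_one σ.1
  rw [gapCounts, habove, hbelow]
  rfl

theorem exists_grow_eq_val {m : ℕ} (τ : TwoAltFolding (m + 1)) :
    ∃ (σ : TwoAltFolding m) (p : Fin (2 * m + 2)), ↑p ∈ gapsAbove σ.1 ∧ grow p σ.1 = τ.1 := by
  obtain ⟨p, σ, hτ⟩ := exists_grow_eq_of_turnedTwoAlt τ.2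
  obtain ⟨hσ, hp⟩ := validLayerOrdering_turnedTwoAlt_grow_iff.1 (hτ ▸ τ.2)
  exact ⟨⟨σ, hσ⟩, p, hp, hτ⟩

/-- The folding from which `grow` produces a given folding of two more stamps. -/
noncomputable def shrink (m : ℕ) (τ : TwoAltFolding (m + 1)) : TwoAltFolding m :=
  (exists_grow_eq_val τ).choose

theorem shrink_eq_iff {m : ℕ} {τ : TwoAltFolding (m + 1)} {σ : TwoAltFolding m} :
    shrink m τ = σ ↔ ∃ p : Fin (2 * m + 2), ↑p ∈ gapsAbove σ.1 ∧ grow p σ.1 = τ.1 := by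
  have hspec := (exists_grow_eq_val τ).choose_spec
  refine ⟨by rintro rfl; exact hspec, fun ⟨p, _, hp⟩ => ?_⟩
  obtain ⟨q, -, hq⟩ := hspec
  exact Subtype.ext (grow_inj.1 (hq.trans hp.symm)).2

theorem bijOn_gapCounts_shrink (m : ℕ) (σ : TwoAltFolding m) :
    Set.BijOn (gapCounts (m + 1)) (shrink m ⁻¹' {σ}) {t | WalkStep (gapCounts m σ) t} := by
  have hrank := bijOn_card_filter_le (gapsAbove σ.1)
  refine ⟨fun τ hτ => ?_, fun τ hτ τ' hτ' h => ?_, fun t ht => ?_⟩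
  · obtain ⟨p, hp, hτ⟩ := shrink_eq_iff.1 hτ
    have := Finset.mem_Icc.1 (hrank.mapsTo hp)
    rw [gapCounts_grow hp hτ]
    exact ⟨rfl, Nat.one_le_cast.2 this.1, Nat.cast_le.2 this.2⟩
  · obtain ⟨p, hp, hτ⟩ := shrink_eq_iff.1 hτ
    obtain ⟨q, hq, hτ'⟩ := shrink_eq_iff.1 hτ'
    rw [gapCounts_grow hp hτ, gapCounts_grow hq hτ', Prod.mk_inj, Nat.cast_inj] at h
    obtain rfl : p = q := Fin.ext (hrank.injOn hp hq h.2)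
    exact Subtype.ext (hτ.symm.trans hτ')
  · obtain ⟨i, j⟩ := t
    obtain ⟨rfl, hj, hj'⟩ := ht
    lift j to ℕ using zero_le_one.trans hj
    obtain ⟨p, hp, rfl⟩ := hrank.surjOn (Finset.mem_coe.2 <| Finset.mem_Icc.2
      ⟨Nat.one_le_cast.1 hj, Nat.cast_le.1 hj'⟩)
    lift p to Fin (2 * m + 2) using Nat.lt_succ_iff.2 (mem_gapsAbove.1 hp).1
    have hτ := validLayerOrdering_turnedTwoAlt_grow_iff.2 ⟨σ.2, hp⟩
    exact ⟨⟨grow p σ.1, hτ⟩, shrink_eq_iff.2 ⟨p, hp, rfl⟩, gapCounts_grow hp rfl⟩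

theorem isGeneratingTree_twoAltFolding : IsGeneratingTree WalkStep (2, 1) gapCounts shrink where
  bijOn_root := by
    refine ⟨fun σ _ => gapCounts_zero σ, fun σ _ τ _ _ => Subtype.ext ?_, ?_⟩
    · exact Subsingleton.elim (α := Equiv.Perm (Fin 1)) σ.1 τ.1
    rintro _ rfl
    exact ⟨⟨1, validLayerOrdering_perm_one _ 1⟩, trivial, gapCounts_zero _⟩
  bijOn_children := bijOn_gapCounts_shrink

end FoldingTree

end StampFolding

/-- Lemma: the number of valid layer orderings of the 2-alternating assignment with
`m` blocks equals the number of walks of length `m` in `ℤ²` starting at `(2,1)`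
with steps `(a,b) → (b+1,i)` for `1 ≤ i ≤ a`. -/
theorem stmt10 (m : ℕ) (hm : 1 ≤ m) :
    foldCount (2 * m + 1) twoAlt = walkCount m := by
  rw [← StampFolding.foldCount_turnedTwoAlt _ m]
  exact StampFolding.isGeneratingTree_twoAltFolding.card_level m
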